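/- Let m ≥ 2 and let (f, p₁, p₂) be a truthful mechanism for an extended multi-unit auction with m items and 2 bidders such that for some finite α ≥ 1 and all v₁, v₂ ∈ D, the welfare v₁(f(v₁,v₂)) + v₂(m−f(v₁,v₂)) is at least (1/α) · max_{t ∈ {0,…,m}} (v₁(t) + v₂(m−t)). Then there exist positive weights w₁, w₂ > 0 and constants c_t ∈ ℝ for t ∈ {0,…,m} such that for all v₁, v₂ ∈ D, f(v₁,v₂) maximizes w₁·v₁(t) + w₂·v₂(m−t) + c_t over all t ∈ {0,…,m}; that is, f is an affine maximizer whose range is the full set of allocations. -/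

import Mathlib

/-- `v` is almost monotone on `{0,…,m}` with peak `k`:
`0 < k ≤ m` and `v(m) ≥ v(m−1) ≥ … ≥ v(k+1) ≥ v(k−1) ≥ v(k−2) ≥ … ≥ v(1)`
(the chain skips the value at `k`). -/
def AlmostMono (m k : ℕ) (v : ℕ → ℝ) : Prop :=
  0 < k ∧ k ≤ m ∧
  (∀ s, k < s → s < m → v s ≤ v (s + 1)) ∧
  (k < m → v (k - 1) ≤ v (k + 1)) ∧
  (∀ s, 1 ≤ s → s + 1 ≤ k - 1 → v s ≤ v (s + 1))

/-- `v` is a valuation of an extended multi-unit auction with `m` items: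
nonnegative, normalized (`v 0 = 0`), and almost monotone for some peak `k`. -/
def ValD (m : ℕ) (v : ℕ → ℝ) : Prop :=
  (∀ s, 0 ≤ v s) ∧ v 0 = 0 ∧ ∃ k, AlmostMono m k v

/-- Truthfulness of a direct-revelation mechanism `(f, p₁, p₂)` for an extended
multi-unit auction with `m` items and 2 bidders: reporting truthfully maximizes
each bidder's utility, for every fixed report of the other bidder.
(`f v₁ v₂` is the number of items given to bidder 1; bidder 2 gets the rest.) -/
def Truthful (m : ℕ) (f : (ℕ → ℝ) → (ℕ → ℝ) → ℕ)
    (p₁ p₂ : (ℕ → ℝ) → (ℕ → ℝ) → ℝ) : Prop :=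
  (∀ v₁ v₁' v₂, ValD m v₁ → ValD m v₁' → ValD m v₂ →
    v₁ (f v₁' v₂) - p₁ v₁' v₂ ≤ v₁ (f v₁ v₂) - p₁ v₁ v₂) ∧
  (∀ v₁ v₂ v₂', ValD m v₁ → ValD m v₂ → ValD m v₂' →
    v₂ (m - f v₁ v₂') - p₂ v₁ v₂' ≤ v₂ (m - f v₁ v₂) - p₂ v₁ v₂)

/-!
Fixing the other bidder's report, truthfulness means that each bidder faces a menu of prices. Let
`π t v` be bidder 1's price for `t` items against the report `v`. The approximation guarantee
controls `π t` on reports `d · 1_{j}`, and truthfulness of bidder 2 then forces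
`π t v = max_j π t ((v j - v (m - t)) · 1_{j})`, up to arbitrarily small changes of the arguments.
Comparing the two menus on a profile where only the allocations `0`, `m - j` and `t` can occur
yields `π t (y · 1_{m}) = π (m - j) ((y - z) · 1_{m}) + π t (z · 1_{j})`, a Pexider equation whose
nonnegative solutions are linear. Hence all these prices have one common slope `w`, so that
`π t v = w * (max v - v (m - t))`, and a bidder who picks the best entry of such a menu maximizes
`v₁ t + w * v₂ (m - t)`.
-/

open Filter Topology

/-- The Pexider equation `G (u + z) = H u + K z` on the positive reals, required only up to
arbitrarily small changes of the arguments, for nonnegative `H` and `K` that vanish at `0⁺`. -/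
structure ApproxPexider (G H K : ℝ → ℝ) : Prop where
  left_nonneg : ∀ d, 0 < d → 0 ≤ H d
  right_nonneg : ∀ d, 0 < d → 0 ≤ K d
  left_tendsto : Tendsto H (𝓝[>] 0) (𝓝 0)
  right_tendsto : Tendsto K (𝓝[>] 0) (𝓝 0)
  le_add : ∀ y u z, 0 < y → 0 < u → 0 < z → y < u + z → G y ≤ H u + K z
  add_le : ∀ y u z, 0 < u → 0 < z → u + z < y → H u + K z ≤ G y

namespace ApproxPexider

variable {G H K : ℝ → ℝ} {u y z : ℝ}

theorem symm (P : ApproxPexider G H K) : ApproxPexider G K H where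
  left_nonneg := P.right_nonneg
  right_nonneg := P.left_nonneg
  left_tendsto := P.right_tendsto
  right_tendsto := P.left_tendsto
  le_add y u z hy hu hz h := by
    rw [add_comm]
    exact P.le_add y z u hy hz hu (by rwa [add_comm])
  add_le y u z hu hz h := by
    rw [add_comm]
    exact P.add_le y z u hz hu (by rwa [add_comm])

theorem sum_le_left (P : ApproxPexider G H K) (hy : 0 < y) (hyu : y < u) : G y ≤ H u := by
  have hlim : Tendsto (fun z => H u + K z) (𝓝[>] 0) (𝓝 (H u)) := by
    simpa only [add_zero] using P.right_tendsto.const_add (H u)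
  refine ge_of_tendsto hlim ?_
  filter_upwards [self_mem_nhdsWithin] with z (hz : 0 < z)
  exact P.le_add y u z hy (hy.trans hyu) hz (by linarith)

theorem left_le_sum (P : ApproxPexider G H K) (hu : 0 < u) (huy : u < y) : H u ≤ G y := by
  have hsum := P.add_le y u ((y - u) / 2) hu (by linarith) (by linarith)
  linarith [P.right_nonneg ((y - u) / 2) (by linarith)]

theorem mono (P : ApproxPexider G H K) (hu : 0 < u) (huy : u < y) : G u ≤ G y := by
  obtain ⟨x, hux, hxy⟩ := exists_between huy
  exact (P.sum_le_left hu hux).trans (P.left_le_sum (hu.trans hux) hxy)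

theorem superadd (P : ApproxPexider G H K) (hu : 0 < u) (hz : 0 < z) (h : u + z < y) :
    G u + G z ≤ G y := by
  obtain ⟨u', huu', hu'⟩ := exists_between (lt_sub_iff_add_lt.2 h)
  obtain ⟨z', hzz', hz'⟩ := exists_between (lt_sub_comm.1 hu')
  exact (add_le_add (P.sum_le_left hu huu') (P.symm.sum_le_left hz hzz')).trans
    (P.add_le y u' z' (hu.trans huu') (hz.trans hzz') (by linarith))

theorem subadd (P : ApproxPexider G H K) (hy : 0 < y) (hu : 0 < u) (hz : 0 < z)
    (h : y < u + z) : G y ≤ G u + G z := by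
  obtain ⟨u', hu', huu'⟩ := exists_between (max_lt (sub_lt_iff_lt_add.2 h) hu)
  obtain ⟨hyu', hu'0⟩ := max_lt_iff.1 hu'
  obtain ⟨z', hz', hzz'⟩ := exists_between (max_lt (sub_lt_comm.1 hyu') hz)
  obtain ⟨hyz', hz'0⟩ := max_lt_iff.1 hz'
  exact (P.le_add y u' z' hy hu'0 hz'0 (by linarith)).trans
    (add_le_add (P.left_le_sum hu'0 huu') (P.symm.left_le_sum hz'0 hzz'))

theorem sum_nonneg (P : ApproxPexider G H K) (hy : 0 < y) : 0 ≤ G y :=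
  (P.left_nonneg (y / 2) (by linarith)).trans (P.left_le_sum (by linarith) (by linarith))

theorem nat_mul_le (P : ApproxPexider G H K) (hu : 0 < u) (n : ℕ) (hy : 0 < y)
    (h : n * u < y) : n * G u ≤ G y := by
  induction n generalizing y with
  | zero => simpa using P.sum_nonneg hy
  | succ n ih =>
    push_cast at h ⊢
    obtain ⟨z, hnz, hzy⟩ := exists_between (show n * u < y - u by linarith)
    have hz : 0 < z := lt_of_le_of_lt (by positivity) hnz
    linarith [ih hz hnz, P.superadd hu hz (by linarith : u + z < y)]

theorem le_nat_mul (P : ApproxPexider G H K) (hu : 0 < u) (n : ℕ) (hy : 0 < y)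
    (h : y < (n + 1) * u) : G y ≤ (n + 1) * G u := by
  induction n generalizing y with
  | zero => simpa using P.mono hy (by simpa using h)
  | succ n ih =>
    push_cast at h ⊢
    obtain ⟨z, hz, hzn⟩ := exists_between
      (max_lt (by linarith : y - u < (n + 1) * u) (by positivity : 0 < (n + 1) * u))
    obtain ⟨hyz, hz0⟩ := max_lt_iff.1 hz
    linarith [ih hz0 hzn, P.subadd hy hu hz0 (by linarith)]

theorem le_div_mul (P : ApproxPexider G H K) (hu : 0 < u) (hy : 0 < y) :
    G u ≤ u / y * G y := by
  by_contra! hlt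
  obtain ⟨n, hn⟩ := exists_nat_gt (G y / (G u - u / y * G y))
  rw [div_lt_iff₀ (sub_pos.2 hlt)] at hn
  have hnonneg : 0 ≤ n * (u / y) := by positivity
  set k := ⌊n * (u / y)⌋₊
  have hnk : n * u < (k + 1) * y := by
    rw [← div_lt_iff₀ hy, mul_div_assoc]
    exact Nat.lt_floor_add_one _
  obtain ⟨x, hnx, hxk⟩ := exists_between hnk
  have hx : 0 < x := lt_of_le_of_lt (by positivity) hnx
  have hcompare : n * G u ≤ (n * (u / y) + 1) * G y :=
    calc n * G u ≤ G x := P.nat_mul_le hu n hx hnx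
      _ ≤ (k + 1) * G y := P.le_nat_mul hy k hx hxk
      _ ≤ (n * (u / y) + 1) * G y := by
        gcongr
        · exact P.sum_nonneg hy
        · exact Nat.floor_le hnonneg
  linarith

theorem sum_eq_mul (P : ApproxPexider G H K) (hu : 0 < u) : G u = G 1 * u := by
  refine le_antisymm (by simpa [mul_comm] using P.le_div_mul hu one_pos) ?_
  have h := P.le_div_mul one_pos hu
  rwa [one_div, ← div_eq_inv_mul, le_div_iff₀ hu] at h

theorem left_eq_mul (P : ApproxPexider G H K) (hu : 0 < u) : H u = G 1 * u := by
  have hcont : Tendsto (fun y => G 1 * y) (𝓝 u) (𝓝 (G 1 * u)) := tendsto_id.const_mul _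
  refine le_antisymm (ge_of_tendsto (hcont.mono_left (nhdsWithin_le_nhds (s := Set.Ioi u))) ?_)
    (le_of_tendsto (hcont.mono_left (nhdsWithin_le_nhds (s := Set.Iio u))) ?_)
  · filter_upwards [self_mem_nhdsWithin] with y (hy : u < y)
    exact (P.left_le_sum hu hy).trans_eq (P.sum_eq_mul (hu.trans hy))
  · filter_upwards [Ioo_mem_nhdsLT hu] with y hy
    exact (P.sum_eq_mul hy.1).symm.trans_le (P.sum_le_left hy.1 hy.2)

theorem right_eq_mul (P : ApproxPexider G H K) (hu : 0 < u) : K u = G 1 * u :=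
  P.symm.left_eq_mul hu

end ApproxPexider

theorem taxation_principle {O : Type*} {o : O} {D : Set (O → ℝ)} {S : Set O} {F : (O → ℝ) → O}
    {p : (O → ℝ) → ℝ} (htruth : ∀ u ∈ D, ∀ u' ∈ D, u (F u') - p u' ≤ u (F u) - p u)
    (hzero : 0 ∈ D) (hnonneg : ∀ u ∈ D, 0 ≤ u) (hnull : ∀ u ∈ D, u o = 0)
    (hmaps : Set.MapsTo F D S) (hsurj : Set.SurjOn F D (S \ {o})) :
    ∃ q : O → ℝ, q o = 0 ∧ (∀ a ∈ S, 0 ≤ q a) ∧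
      ∀ u ∈ D, ∀ a ∈ S, u a - q a ≤ u (F u) - q (F u) := by
  -- The zero report prices `o`, as no report need select `o`.
  have hreport : ∀ a, ∃ r ∈ D, (a = o → r = 0) ∧ (a ∈ S \ {o} → F r = a) := by
    intro a
    by_cases ha : a ∈ S \ {o}
    · obtain ⟨r, hr, hFr⟩ := hsurj ha
      exact ⟨r, hr, fun h => absurd h ha.2, fun _ => hFr⟩
    · exact ⟨0, hzero, fun _ => rfl, fun h => absurd h ha⟩
  choose r hrD hro hrF using hreport
  have hdev : ∀ u ∈ D, ∀ a ∈ S, u a ≤ u (F (r a)) := by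
    intro u hu a ha
    rcases eq_or_ne a o with rfl | hao
    · exact (hnull u hu).trans_le (hnonneg u hu _)
    · rw [hrF a ⟨ha, hao⟩]
  have hown : ∀ a ∈ S, r a (F (r a)) = r a a := by
    intro a ha
    rcases eq_or_ne a o with rfl | hao
    · rw [hro a rfl, Pi.zero_apply, Pi.zero_apply]
    · rw [hrF a ⟨ha, hao⟩]
  refine ⟨fun a => p (r a) - p 0, by simp [hro o rfl], fun a _ => ?_, fun u hu a ha => ?_⟩
  · simpa using htruth 0 hzero (r a) (hrD a)
  · linarith [htruth u hu (r a) (hrD a), hdev u hu a ha, hown (F u) (hmaps hu),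
      htruth (r (F u)) (hrD _) u hu]

theorem ValD.nonneg {m : ℕ} {v : ℕ → ℝ} (hv : ValD m v) (s : ℕ) : 0 ≤ v s := hv.1 s

theorem ValD.map_zero {m : ℕ} {v : ℕ → ℝ} (hv : ValD m v) : v 0 = 0 := hv.2.1

theorem ValD.pos_of_lt {m i j : ℕ} {v : ℕ → ℝ} (hv : ValD m v) (h : v i < v j) : 0 < j := by
  refine Nat.pos_of_ne_zero ?_
  rintro rfl
  exact h.not_ge (hv.map_zero.trans_le (hv.nonneg i))

theorem valD_update_of_monotone {m k : ℕ} {g : ℕ → ℝ} {x : ℝ} (hg : Monotone g) (hg0 : g 0 = 0)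
    (hk : 0 < k) (hkm : k ≤ m) (hx : 0 ≤ x) : ValD m (Function.update g k x) := by
  have hmono : ∀ {i j : ℕ}, i ≠ k → j ≠ k → i ≤ j →
      Function.update g k x i ≤ Function.update g k x j := by
    intro i j hi hj hij
    rw [Function.update_of_ne hi, Function.update_of_ne hj]
    exact hg hij
  refine ⟨fun s => ?_, by rw [Function.update_of_ne hk.ne, hg0], k, hk, hkm,
    fun s _ _ => hmono ?_ ?_ ?_, fun _ => hmono ?_ ?_ ?_, fun s _ _ => hmono ?_ ?_ ?_⟩
  · rcases eq_or_ne s k with rfl | hs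
    · rwa [Function.update_self]
    · rw [Function.update_of_ne hs, ← hg0]
      exact hg (Nat.zero_le s)
  all_goals omega

theorem valD_single {m k : ℕ} {x : ℝ} (hk : 0 < k) (hkm : k ≤ m) (hx : 0 ≤ x) :
    ValD m (Pi.single k x) :=
  valD_update_of_monotone monotone_const rfl hk hkm hx

theorem valD_zero {m : ℕ} (hm : 0 < m) : ValD m 0 := by
  simpa using valD_single hm le_rfl (le_refl (0 : ℝ))

/-- A feasible allocation rule whose welfare is within a factor `α` of the optimum; the factor is
kept on the right-hand side to avoid division. -/
structure ApproxEfficient (m : ℕ) (α : ℝ) (f : (ℕ → ℝ) → (ℕ → ℝ) → ℕ) : Prop where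
  factor_pos : 0 < α
  alloc_le : ∀ v₁ v₂, ValD m v₁ → ValD m v₂ → f v₁ v₂ ≤ m
  welfare_le : ∀ v₁ v₂, ValD m v₁ → ValD m v₂ → ∀ t, t ≤ m →
    v₁ t + v₂ (m - t) ≤ α * (v₁ (f v₁ v₂) + v₂ (m - f v₁ v₂))

namespace ApproxEfficient

variable {m : ℕ} {α : ℝ} {f : (ℕ → ℝ) → (ℕ → ℝ) → ℕ}

theorem swap (E : ApproxEfficient m α f) : ApproxEfficient m α (fun v₁ v₂ => m - f v₂ v₁) where
  factor_pos := E.factor_pos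
  alloc_le _ _ _ _ := Nat.sub_le _ _
  welfare_le v₁ v₂ h₁ h₂ t ht := by
    have hw := E.welfare_le v₂ v₁ h₂ h₁ (m - t) (Nat.sub_le _ _)
    rw [Nat.sub_sub_self ht] at hw
    rw [Nat.sub_sub_self (E.alloc_le v₂ v₁ h₂ h₁)]
    linarith

theorem exists_alloc_eq (E : ApproxEfficient m α f) {v : ℕ → ℝ} (hv : ValD m v) {t : ℕ}
    (ht : 0 < t) (htm : t ≤ m) : ∃ u, ValD m u ∧ f u v = t := by
  obtain ⟨k, -, hk⟩ := Set.exists_max_image (Set.Iic m) v (Set.finite_Iic m) ⟨0, Nat.zero_le m⟩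
  have hkα : 0 ≤ α * v k := mul_nonneg E.factor_pos.le (hv.nonneg k)
  have hu : ValD m (Pi.single t (α * v k + 1)) := valD_single ht htm (by linarith)
  refine ⟨_, hu, by_contra fun hne => ?_⟩
  have hw := E.welfare_le _ v hu hv t htm
  rw [Pi.single_eq_same, Pi.single_eq_of_ne hne, zero_add] at hw
  have hmax := mul_le_mul_of_nonneg_left (hk (m - f (Pi.single t (α * v k + 1)) v)
    (Nat.sub_le _ _)) E.factor_pos.le
  linarith [hv.nonneg (m - t)]

theorem exists_menu (E : ApproxEfficient m α f) (hm : 0 < m) {p : (ℕ → ℝ) → (ℕ → ℝ) → ℝ}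
    (htruth : ∀ v₁ v₁' v₂, ValD m v₁ → ValD m v₁' → ValD m v₂ →
      v₁ (f v₁' v₂) - p v₁' v₂ ≤ v₁ (f v₁ v₂) - p v₁ v₂) :
    ∃ π : ℕ → (ℕ → ℝ) → ℝ, ∀ v₂, ValD m v₂ → π 0 v₂ = 0 ∧ (∀ t, t ≤ m → 0 ≤ π t v₂) ∧
      ∀ v₁, ValD m v₁ → ∀ t, t ≤ m → v₁ t - π t v₂ ≤ v₁ (f v₁ v₂) - π (f v₁ v₂) v₂ := by
  have hmenu : ∀ v₂, ∃ q : ℕ → ℝ, ValD m v₂ → q 0 = 0 ∧ (∀ t, t ≤ m → 0 ≤ q t) ∧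
      ∀ v₁, ValD m v₁ → ∀ t, t ≤ m → v₁ t - q t ≤ v₁ (f v₁ v₂) - q (f v₁ v₂) := by
    intro v₂
    by_cases h₂ : ValD m v₂
    · obtain ⟨q, hq⟩ := taxation_principle (D := {v | ValD m v}) (S := Set.Iic m)
        (F := fun v₁ => f v₁ v₂) (p := fun v₁ => p v₁ v₂) (o := 0)
        (fun v₁ h₁ v₁' h₁' => htruth v₁ v₁' v₂ h₁ h₁' h₂) (valD_zero hm) (fun _ h => h.nonneg)
        (fun _ h => h.map_zero) (fun v₁ h₁ => E.alloc_le v₁ v₂ h₁ h₂)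
        (fun t ht => E.exists_alloc_eq h₂ (Nat.pos_of_ne_zero ht.2) ht.1)
      exact ⟨q, fun _ => hq⟩
    · exact ⟨0, fun h => absurd h h₂⟩
  choose q hq using hmenu
  exact ⟨fun t v₂ => q v₂ t, hq⟩

end ApproxEfficient

/-- An approximately efficient allocation rule implemented by menus: facing the report `v₂`,
bidder 1 gets a favourite number of items at the prices `π · v₂`, and bidder 2 likewise at the
prices `ρ · v₁`. Prices are nonnegative and vanish on the empty bundle. -/
structure PriceMechanism (m : ℕ) (α : ℝ) (f : (ℕ → ℝ) → (ℕ → ℝ) → ℕ)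
    (π ρ : ℕ → (ℕ → ℝ) → ℝ) : Prop extends ApproxEfficient m α f where
  price₁_zero : ∀ v, ValD m v → π 0 v = 0
  price₂_zero : ∀ v, ValD m v → ρ 0 v = 0
  price₁_nonneg : ∀ v, ValD m v → ∀ t, t ≤ m → 0 ≤ π t v
  price₂_nonneg : ∀ v, ValD m v → ∀ j, j ≤ m → 0 ≤ ρ j v
  utility₁_le : ∀ v₁ v₂, ValD m v₁ → ValD m v₂ → ∀ t, t ≤ m →
    v₁ t - π t v₂ ≤ v₁ (f v₁ v₂) - π (f v₁ v₂) v₂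
  utility₂_le : ∀ v₁ v₂, ValD m v₁ → ValD m v₂ → ∀ j, j ≤ m →
    v₂ j - ρ j v₁ ≤ v₂ (m - f v₁ v₂) - ρ (m - f v₁ v₂) v₁

theorem Truthful.exists_priceMechanism {m : ℕ} {α : ℝ} {f : (ℕ → ℝ) → (ℕ → ℝ) → ℕ}
    {p₁ p₂ : (ℕ → ℝ) → (ℕ → ℝ) → ℝ} (htruth : Truthful m f p₁ p₂) (hm : 0 < m)
    (E : ApproxEfficient m α f) : ∃ π ρ, PriceMechanism m α f π ρ := by
  obtain ⟨π, hπ⟩ := E.exists_menu hm htruth.1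
  obtain ⟨ρ, hρ⟩ := E.swap.exists_menu hm (p := fun v₂ v₁ => p₂ v₁ v₂)
    fun v₂ v₂' v₁ h₂ h₂' h₁ => htruth.2 v₁ v₂ v₂' h₁ h₂ h₂'
  exact ⟨π, ρ, E, fun v hv => (hπ v hv).1, fun v hv => (hρ v hv).1, fun v hv => (hπ v hv).2.1,
    fun v hv => (hρ v hv).2.1, fun v₁ v₂ h₁ h₂ => (hπ v₂ h₂).2.2 v₁ h₁,
    fun v₁ v₂ h₁ h₂ => (hρ v₁ h₁).2.2 v₂ h₂⟩

namespace PriceMechanism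

variable {m : ℕ} {α : ℝ} {f : (ℕ → ℝ) → (ℕ → ℝ) → ℕ} {π ρ : ℕ → (ℕ → ℝ) → ℝ} {t j : ℕ}
  {b d x y z : ℝ} {u v : ℕ → ℝ}

theorem swap (M : PriceMechanism m α f π ρ) :
    PriceMechanism m α (fun v₁ v₂ => m - f v₂ v₁) ρ π where
  toApproxEfficient := M.toApproxEfficient.swap
  price₁_zero := M.price₂_zero
  price₂_zero := M.price₁_zero
  price₁_nonneg := M.price₂_nonneg
  price₂_nonneg := M.price₁_nonneg
  utility₁_le v₁ v₂ h₁ h₂ := M.utility₂_le v₂ v₁ h₂ h₁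
  utility₂_le v₁ v₂ h₁ h₂ := by
    simpa only [Nat.sub_sub_self (M.alloc_le v₂ v₁ h₂ h₁)] using M.utility₁_le v₂ v₁ h₂ h₁

theorem alloc_single_eq (M : PriceMechanism m α f π ρ) (ht : 0 < t) (htm : t ≤ m)
    (hv : ValD m v) (hx : π t v < x) : f (Pi.single t x) v = t := by
  have hs : ValD m (Pi.single t x) :=
    valD_single ht htm ((M.price₁_nonneg v hv t htm).trans hx.le)
  by_contra hne
  have hutil := M.utility₁_le _ v hs hv t htm
  rw [Pi.single_eq_same, Pi.single_eq_of_ne hne] at hutil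
  linarith [M.price₁_nonneg v hv _ (M.alloc_le _ v hs hv)]

theorem price₁_le_of_alloc_single_eq (M : PriceMechanism m α f π ρ) (ht : 0 < t) (htm : t ≤ m)
    (hx : 0 ≤ x) (hv : ValD m v) (h : f (Pi.single t x) v = t) : π t v ≤ x := by
  have hutil := M.utility₁_le _ v (valD_single ht htm hx) hv 0 (Nat.zero_le m)
  rw [h, Pi.single_eq_same, Pi.single_eq_of_ne ht.ne, M.price₁_zero v hv] at hutil
  linarith

theorem alloc_single_single (M : PriceMechanism m α f π ρ) (ht : 0 < t) (htm : t ≤ m)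
    (hj : 0 < j) (hjm : j ≤ m) (hx : 0 < x) (hy : 0 ≤ y) :
    f (Pi.single t x) (Pi.single j y) = t ∨ m - f (Pi.single t x) (Pi.single j y) = j := by
  by_contra! hne
  have hs₂ : ValD m (Pi.single j y) := valD_single hj hjm hy
  have hw := M.welfare_le _ _ (valD_single ht htm hx.le) hs₂ t htm
  rw [Pi.single_eq_same, Pi.single_eq_of_ne hne.1, Pi.single_eq_of_ne hne.2] at hw
  linarith [hs₂.nonneg (m - t)]

theorem single_price₁_le (M : PriceMechanism m α f π ρ) (ht : 0 < t) (htm : t ≤ m) (hj : 0 < j)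
    (hjm : j ≤ m) (htj : t + j ≠ m) (hy : 0 ≤ y) : π t (Pi.single j y) ≤ α * y := by
  refine le_of_forall_gt_imp_ge_of_dense fun x hx => ?_
  have hx0 : 0 < x := lt_of_le_of_lt (mul_nonneg M.factor_pos.le hy) hx
  have hs₁ : ValD m (Pi.single t x) := valD_single ht htm hx0.le
  have hs₂ : ValD m (Pi.single j y) := valD_single hj hjm hy
  refine M.price₁_le_of_alloc_single_eq ht htm hx0.le hs₂ (by_contra fun hne => ?_)
  have hjt : m - t ≠ j := fun h => htj (by omega)
  have hj' := (M.alloc_single_single ht htm hj hjm hx0 hy).resolve_left hne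
  have hw := M.welfare_le _ _ hs₁ hs₂ t htm
  rw [hj', Pi.single_eq_same, Pi.single_eq_same, Pi.single_eq_of_ne hne,
    Pi.single_eq_of_ne hjt] at hw
  linarith

theorem div_le_single_price₁ (M : PriceMechanism m α f π ρ) (ht : 0 < t) (htm : t ≤ m)
    (hj : 0 < j) (hjm : j ≤ m) (htj : t + j ≠ m) (hy : 0 ≤ y) :
    y / α ≤ π t (Pi.single j y) := by
  have hs₂ : ValD m (Pi.single j y) := valD_single hj hjm hy
  refine le_of_forall_gt_imp_ge_of_dense fun x hx => ?_
  have hx0 : 0 ≤ x := (M.price₁_nonneg _ hs₂ t htm).trans hx.le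
  have hw := M.welfare_le _ _ (valD_single ht htm hx0) hs₂ (m - j) (Nat.sub_le _ _)
  rw [M.alloc_single_eq ht htm hs₂ hx, Nat.sub_sub_self hjm, Pi.single_eq_same,
    Pi.single_eq_same, Pi.single_eq_of_ne (by omega : m - j ≠ t),
    Pi.single_eq_of_ne (by omega : m - t ≠ j)] at hw
  rw [div_le_iff₀ M.factor_pos]
  linarith

theorem single_price₁_pos (M : PriceMechanism m α f π ρ) (ht : 0 < t) (htm : t ≤ m) (hj : 0 < j)
    (hjm : j ≤ m) (htj : t + j ≠ m) (hy : 0 < y) : 0 < π t (Pi.single j y) :=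
  (div_pos hy M.factor_pos).trans_le (M.div_le_single_price₁ ht htm hj hjm htj hy.le)

theorem tendsto_single_price₁ (M : PriceMechanism m α f π ρ) (ht : 0 < t) (htm : t ≤ m)
    (hj : 0 < j) (hjm : j ≤ m) (htj : t + j ≠ m) :
    Tendsto (fun d => π t (Pi.single j d)) (𝓝[>] 0) (𝓝 0) := by
  have hlim : Tendsto (fun d => α * d) (𝓝[>] 0) (𝓝 0) :=
    ((continuous_const_mul α).tendsto' 0 0 (mul_zero α)).mono_left nhdsWithin_le_nhds
  refine squeeze_zero' ?_ ?_ hlim <;> filter_upwards [self_mem_nhdsWithin] with d (hd : 0 < d)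
  · exact M.price₁_nonneg _ (valD_single hj hjm hd.le) t htm
  · exact M.single_price₁_le ht htm hj hjm htj hd.le

theorem price₂_compl_single (M : PriceMechanism m α f π ρ) (ht : 0 < t) (htm : t ≤ m)
    (hx : 0 < x) : ρ (m - t) (Pi.single t x) = 0 := by
  have hs : ValD m (Pi.single t x) := valD_single ht htm hx.le
  have hz : ValD m 0 := valD_zero (ht.trans_le htm)
  have halloc : f (Pi.single t x) 0 = t := by
    by_contra hne
    have hw := M.welfare_le _ 0 hs hz t htm
    simp only [Pi.single_eq_same, Pi.single_eq_of_ne hne, Pi.zero_apply] at hw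
    linarith
  have hutil := M.utility₂_le _ 0 hs hz 0 (Nat.zero_le m)
  rw [halloc, M.price₂_zero _ hs, Pi.zero_apply, Pi.zero_apply] at hutil
  linarith [M.price₂_nonneg _ hs (m - t) (Nat.sub_le _ _)]

theorem single_price₁_le_of_lt_price₂ (M : PriceMechanism m α f π ρ) (ht : 0 < t) (htm : t ≤ m)
    (hj : 0 < j) (hjm : j ≤ m) (hx : 0 < x) (hy : 0 ≤ y) (h : y < ρ j (Pi.single t x)) :
    π t (Pi.single j y) ≤ x := by
  have hs₁ : ValD m (Pi.single t x) := valD_single ht htm hx.le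
  have hs₂ : ValD m (Pi.single j y) := valD_single hj hjm hy
  rcases M.alloc_single_single ht htm hj hjm hx hy with halloc | halloc
  · exact M.price₁_le_of_alloc_single_eq ht htm hx.le hs₂ halloc
  · have hutil := M.utility₂_le _ _ hs₁ hs₂ 0 (Nat.zero_le m)
    rw [halloc, M.price₂_zero _ hs₁, Pi.single_eq_same, Pi.single_eq_of_ne hj.ne] at hutil
    linarith

theorem le_single_price₂_of_price₁_lt (M : PriceMechanism m α f π ρ) (ht : 0 < t) (htm : t ≤ m)
    (hj : 0 < j) (hjm : j ≤ m) (htj : t + j ≠ m) (hy : 0 ≤ y) (h : π t (Pi.single j y) < x) :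
    y ≤ ρ j (Pi.single t x) := by
  have hs₂ : ValD m (Pi.single j y) := valD_single hj hjm hy
  have hx : 0 < x := (M.price₁_nonneg _ hs₂ t htm).trans_lt h
  have hutil := M.utility₂_le _ _ (valD_single ht htm hx.le) hs₂ j hjm
  rw [M.alloc_single_eq ht htm hs₂ h, M.price₂_compl_single ht htm hx, Pi.single_eq_same,
    Pi.single_eq_of_ne (by omega : m - t ≠ j)] at hutil
  linarith

theorem single_price₁_le_price₁ (M : PriceMechanism m α f π ρ) (hv : ValD m v) (ht : 0 < t)
    (htm : t ≤ m) (hjm : j ≤ m) (hd : 0 ≤ d) (h : d < v j - v (m - t)) :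
    π t (Pi.single j d) ≤ π t v := by
  have hj : 0 < j := hv.pos_of_lt (i := m - t) (by linarith)
  refine le_of_forall_gt_imp_ge_of_dense fun x hx => ?_
  have hx0 : 0 < x := (M.price₁_nonneg v hv t htm).trans_lt hx
  have hutil := M.utility₂_le _ v (valD_single ht htm hx0.le) hv j hjm
  rw [M.alloc_single_eq ht htm hv hx, M.price₂_compl_single ht htm hx0] at hutil
  exact M.single_price₁_le_of_lt_price₂ ht htm hj hjm hx0 hd (by linarith)

theorem price₁_pos (M : PriceMechanism m α f π ρ) (hv : ValD m v) (ht : 0 < t) (htm : t ≤ m)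
    (hjm : j ≤ m) (h : v (m - t) < v j) : 0 < π t v := by
  obtain ⟨d, hd, hdj⟩ := exists_between (sub_pos.2 h)
  have hj : 0 < j := hv.pos_of_lt h
  have htj : t + j ≠ m := by
    rintro rfl
    exact h.ne (by rw [Nat.add_sub_cancel_left])
  exact (M.single_price₁_pos ht htm hj hjm htj hd).trans_le
    (M.single_price₁_le_price₁ hv ht htm hjm hd.le hdj)

theorem exists_price₂_single_le_of_lt_price₁ (M : PriceMechanism m α f π ρ) (hv : ValD m v)
    (ht : 0 < t) (htm : t ≤ m) (hx : 0 < x) (h : x < π t v) :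
    ∃ i, 0 < i ∧ i ≤ m ∧ i ≠ m - t ∧ ρ i (Pi.single t x) ≤ v i - v (m - t) ∧
      (i = m ∨ ∀ k, k ≤ m → v k ≤ v i) := by
  have hs : ValD m (Pi.single t x) := valD_single ht htm hx.le
  have hne : f (Pi.single t x) v ≠ t := fun halloc =>
    h.not_ge (M.price₁_le_of_alloc_single_eq ht htm hx.le hv halloc)
  have hw := M.welfare_le _ v hs hv t htm
  have hutil₁ := M.utility₁_le _ v hs hv 0 (Nat.zero_le m)
  have hutil₂ := M.utility₂_le _ v hs hv (m - t) (Nat.sub_le _ _)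
  have hsm := M.alloc_le _ v hs hv
  rw [Pi.single_eq_same, Pi.single_eq_of_ne hne] at hw
  rw [M.price₁_zero v hv, Pi.single_eq_of_ne hne, Pi.single_eq_of_ne ht.ne] at hutil₁
  rw [M.price₂_compl_single ht htm hx] at hutil₂
  generalize f (Pi.single t x) v = s at *
  have hs_ne : s ≠ m := by
    rintro rfl
    rw [Nat.sub_self, hv.map_zero] at hw
    linarith [hv.nonneg (s - t)]
  refine ⟨m - s, by omega, Nat.sub_le _ _, by omega, by linarith, ?_⟩
  rcases Nat.eq_zero_or_pos s with rfl | hs0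
  · exact Or.inl (Nat.sub_zero m)
  · refine Or.inr fun k hk => ?_
    by_contra! hlt
    linarith [M.price₁_pos hv hs0 hsm hk hlt]

theorem price₁_le_of_single_price₁_le (M : PriceMechanism m α f π ρ) (hv : ValD m v)
    (ht : 0 < t) (htm : t ≤ m) (hb : 0 ≤ b)
    (h : ∀ i, 0 < i → i ≤ m → i ≠ m - t → v (m - t) ≤ v i →
      (i = m ∨ ∀ k, k ≤ m → v k ≤ v i) → ∃ d, v i - v (m - t) < d ∧ π t (Pi.single i d) ≤ b) :
    π t v ≤ b := by
  refine le_of_forall_lt_imp_le_of_dense fun x hx => ?_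
  by_contra! hbx
  have hx0 : 0 < x := hb.trans_lt hbx
  obtain ⟨i, hi, him, hit, hρ, hmax⟩ := M.exists_price₂_single_le_of_lt_price₁ hv ht htm hx0 hx
  have hvi : 0 ≤ v i - v (m - t) :=
    (M.price₂_nonneg _ (valD_single ht htm hx0.le) i him).trans hρ
  obtain ⟨d, hd, hdb⟩ := h i hi him hit (sub_nonneg.1 hvi) hmax
  have hdρ := M.le_single_price₂_of_price₁_lt ht htm hi him (by omega) (hvi.trans hd.le)
    (hdb.trans_lt hbx)
  linarith

theorem price₁_le_single_top (M : PriceMechanism m α f π ρ) (hv : ValD m v) (ht : 0 < t)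
    (htm : t ≤ m) (hmax : ∀ i, i < m → v i < v m) (hd : v m - v (m - t) < d) :
    π t v ≤ π t (Pi.single m d) := by
  have hd0 : 0 ≤ d := by linarith [hmax (m - t) (by omega)]
  have hs : ValD m (Pi.single m d) := valD_single (ht.trans_le htm) le_rfl hd0
  refine M.price₁_le_of_single_price₁_le hv ht htm (M.price₁_nonneg _ hs t htm) ?_
  intro i _ him _ _ htop
  obtain rfl : i = m := by
    refine htop.elim id fun hi => ?_
    by_contra hne
    exact (hmax i (by omega)).not_ge (hi m le_rfl)
  exact ⟨d, hd, le_rfl⟩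

theorem price₂_compl_eq_zero (M : PriceMechanism m α f π ρ) (hu : ValD m u) (htm : t ≤ m)
    (hmax : ∀ s, s ≤ m → s ≠ t → u s < u t) : ρ (m - t) u = 0 := by
  rcases htm.eq_or_lt with rfl | htm'
  · rw [Nat.sub_self, M.price₂_zero u hu]
  · refine le_antisymm ?_ (M.price₂_nonneg u hu _ (Nat.sub_le _ _))
    refine M.swap.price₁_le_of_single_price₁_le hu (by omega) (Nat.sub_le _ _) le_rfl ?_
    intro s _ hsm hst hle _
    rw [Nat.sub_sub_self htm] at hst hle
    exact absurd hle (hmax s hsm hst).not_ge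

theorem le_price₂_of_single_price₁_lt (M : PriceMechanism m α f π ρ) (hu : ValD m u)
    (ht : 0 < t) (htm : t ≤ m) (hj : 0 < j) (hjm : j ≤ m) (htj : t + j ≠ m) (hy : 0 ≤ y)
    (h : π t (Pi.single j y) < u t - u (m - j)) : y ≤ ρ j u := by
  obtain ⟨d, hπd, hdu⟩ := exists_between h
  have hd : 0 ≤ d := (M.price₁_nonneg _ (valD_single hj hjm hy) t htm).trans hπd.le
  exact (M.le_single_price₂_of_price₁_lt ht htm hj hjm htj hy hπd).trans
    (M.swap.single_price₁_le_price₁ hu hj hjm htm hd hdu)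

theorem price₂_le_of_lt_single_price₁ (M : PriceMechanism m α f π ρ) (hu : ValD m u)
    (ht : 0 < t) (htm : t ≤ m) (hj : 0 < j) (hjm : j ≤ m) (hy : 0 < y)
    (hmax : ∀ s, s ≤ m → s ≠ t → u s ≤ u (m - j)) (hut : u (m - j) ≤ u t)
    (h : u t - u (m - j) < π t (Pi.single j y)) : ρ j u ≤ y := by
  refine M.swap.price₁_le_of_single_price₁_le hu hj hjm hy.le ?_
  intro s hs hsm hsj _ _
  rcases eq_or_ne s t with rfl | hst
  · obtain ⟨d, hud, hdπ⟩ := exists_between h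
    refine ⟨d, hud, ?_⟩
    by_contra! hyρ
    exact hdπ.not_ge
      (M.single_price₁_le_of_lt_price₂ ht htm hj hjm (by linarith) hy.le hyρ)
  · have hyα : 0 < y / α := div_pos hy M.factor_pos
    refine ⟨y / α, by linarith [hmax s hsm hst], ?_⟩
    have hprice := M.swap.single_price₁_le hj hjm hs hsm (by omega) hyα.le
    rwa [mul_div_cancel₀ _ M.factor_pos.ne'] at hprice

end PriceMechanism

/-- A report of bidder 2 exceeding its value for `m - t` items by `y` on `m` items, by `z` on `j`
items, and nowhere else. With `base_pos`, it leaves only the allocations `0`, `m - j` and `t`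
against a report of bidder 1 with its two highest values at `t` and `m - j`. -/
structure IsTestReport (m t j : ℕ) (y z : ℝ) (v : ℕ → ℝ) : Prop where
  valD : ValD m v
  value_top : v m = v (m - t) + y
  value_second : v j = v (m - t) + z
  le_base : ∀ i, i < m → i ≠ j → v i ≤ v (m - t)
  base_pos : t ≠ m → 0 < v (m - t)

theorem exists_isTestReport {m t j : ℕ} {y z : ℝ} (ht : 0 < t) (htm : t ≤ m) (hj : 0 < j)
    (hjm : j < m) (htj : t + j ≠ m) (hy : 0 ≤ y) (hz : 0 ≤ z) : ∃ v, IsTestReport m t j y z v := by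
  obtain ⟨ε, hε, hεt, hεpos⟩ : ∃ ε : ℝ, 0 ≤ ε ∧ (t = m → ε = 0) ∧ (t ≠ m → 0 < ε) := by
    rcases htm.eq_or_lt with rfl | htm_lt
    · exact ⟨0, le_rfl, fun _ => rfl, fun h => absurd rfl h⟩
    · exact ⟨1, zero_le_one, fun h => absurd h htm_lt.ne, fun _ => one_pos⟩
  let g : ℕ → ℝ := fun i => if i = 0 then 0 else if i < m then ε else ε + y
  have hg : Monotone g := by
    intro a b hab
    dsimp only [g]
    split_ifs <;> first | omega | linarith
  have hbase : g (m - t) = ε := by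
    by_cases h0 : m - t = 0
    · simp [g, h0, hεt (by omega)]
    · simp [g, h0, show m - t < m by omega]
  have hne : m - t ≠ j := by omega
  refine ⟨Function.update g j (ε + z),
    valD_update_of_monotone hg rfl hj hjm.le (add_nonneg hε hz), ?_, ?_, fun i him hij => ?_, ?_⟩
  · rw [Function.update_of_ne hjm.ne', Function.update_of_ne hne, hbase]
    simp [g, (hj.trans hjm).ne']
  · rw [Function.update_self, Function.update_of_ne hne, hbase]
  · rw [Function.update_of_ne hij, Function.update_of_ne hne, hbase]
    dsimp only [g]
    split_ifs
    exacts [hε, le_rfl]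
  · rwa [Function.update_of_ne hne, hbase]

theorem IsTestReport.lt_top {m t j : ℕ} {y z : ℝ} {v : ℕ → ℝ} (hv : IsTestReport m t j y z v)
    (hz : 0 < z) (hzy : z < y) {i : ℕ} (him : i < m) : v i < v m := by
  rw [hv.value_top]
  rcases eq_or_ne i j with rfl | hij
  · linarith [hv.value_second]
  · linarith [hv.le_base i him hij]

namespace PriceMechanism

variable {m : ℕ} {α : ℝ} {f : (ℕ → ℝ) → (ℕ → ℝ) → ℕ} {π ρ : ℕ → (ℕ → ℝ) → ℝ} {t j : ℕ}
  {d x y z : ℝ} {v : ℕ → ℝ}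

theorem alloc_mem_of_isTestReport (M : PriceMechanism m α f π ρ) (hv : IsTestReport m t j y z v)
    (hu : ValD m u) (ht : 0 < t) (htm : t ≤ m) (hut : u (m - j) < u t)
    (hmax : ∀ s, s ≤ m → s ≠ t → u s ≤ u (m - j)) :
    f u v = 0 ∨ f u v = m - j ∨ f u v = t := by
  have hutil := M.utility₂_le u v hu hv.valD (m - t) (Nat.sub_le _ _)
  have hsm := M.alloc_le u v hu hv.valD
  rw [M.price₂_compl_eq_zero hu htm fun s hs hst => (hmax s hs hst).trans_lt hut] at hutil
  generalize f u v = s at *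
  by_contra! hs
  obtain ⟨hs0, hsj, hst⟩ := hs
  rcases hsm.eq_or_lt with rfl | hsm'
  · rw [Nat.sub_self, hv.valD.map_zero, M.price₂_zero u hu] at hutil
    linarith [hv.base_pos hst.symm]
  · have hpos : 0 < ρ (m - s) u := M.swap.price₁_pos hu (by omega) (Nat.sub_le _ _) htm <| by
      rw [Nat.sub_sub_self hsm]
      exact (hmax s hsm hst).trans_lt hut
    linarith [hv.le_base (m - s) (by omega) (by omega)]

theorem exists_report_alloc_mem (M : PriceMechanism m α f π ρ) (hv : IsTestReport m t j y z v)
    (ht : 0 < t) (htm : t ≤ m) (hjm : j < m) (htj : t + j ≠ m) (hd : 0 < d) :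
    ∃ u, ValD m u ∧ u t = u (m - j) + d ∧ (∀ s, s ≤ m → s ≠ t → u s ≤ u (m - j)) ∧
      (f u v = m - j ∨ f u v = t) := by
  -- Raising `u` above `π (m - j) v` makes the allocation `0` worse for bidder 1 than `m - j`.
  set a := π (m - j) v + 1
  have ha : 0 ≤ a := add_nonneg (M.price₁_nonneg v hv.valD _ (Nat.sub_le _ _)) zero_le_one
  let g : ℕ → ℝ := fun i => if i = 0 then 0 else a
  have hg : Monotone g := by
    intro i k hik
    dsimp only [g]
    split_ifs <;> first | omega | linarith
  obtain ⟨u, hu_def⟩ : ∃ u, u = Function.update g t (a + d) := ⟨_, rfl⟩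
  have hu : ValD m u := hu_def ▸ valD_update_of_monotone hg rfl ht htm (by linarith)
  have hu_top : u t = a + d := by rw [hu_def, Function.update_self]
  have hu_flat : ∀ s, s ≠ t → u s = g s := fun s hs => by rw [hu_def, Function.update_of_ne hs]
  have hu_mid : u (m - j) = a := by
    rw [hu_flat _ (by omega)]
    exact if_neg (by omega)
  have hmax : ∀ s, s ≤ m → s ≠ t → u s ≤ u (m - j) := by
    intro s _ hs
    rw [hu_flat s hs, hu_mid]
    dsimp only [g]
    split_ifs
    exacts [ha, le_rfl]
  refine ⟨u, hu, by rw [hu_top, hu_mid], hmax, ?_⟩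
  refine (M.alloc_mem_of_isTestReport hv hu ht htm (by linarith) hmax).resolve_left fun h0 => ?_
  have hutil := M.utility₁_le u v hu hv.valD (m - j) (Nat.sub_le _ _)
  rw [h0, hu.map_zero, M.price₁_zero v hv.valD, hu_mid] at hutil
  linarith

theorem single_price₁_le_price₁_sub (M : PriceMechanism m α f π ρ)
    (hv : IsTestReport m t j y z v) (ht : 0 < t) (htm : t ≤ m) (hj : 0 < j) (hjm : j < m)
    (htj : t + j ≠ m) (hx : 0 < x) (hxz : x < z) :
    π t (Pi.single j x) ≤ π t v - π (m - j) v := by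
  by_contra! hlt
  obtain ⟨d, hd, hdπ⟩ :=
    exists_between (max_lt hlt (M.single_price₁_pos ht htm hj hjm.le htj hx))
  obtain ⟨hdiff, hd0⟩ := max_lt_iff.1 hd
  obtain ⟨u, hu, hut, hmax, halloc⟩ := M.exists_report_alloc_mem hv ht htm hjm htj hd0
  have hutil₁ := M.utility₁_le u v hu hv.valD t htm
  have hutil₂ := M.utility₂_le u v hu hv.valD j hjm.le
  rcases halloc with halloc | halloc
  · rw [halloc] at hutil₁
    linarith
  · rw [halloc, hv.value_second, M.price₂_compl_eq_zero hu htm fun s hs hst =>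
      (hmax s hs hst).trans_lt (by linarith)] at hutil₂
    have hρ := M.price₂_le_of_lt_single_price₁ hu ht htm hj hjm.le hx hmax (by linarith)
      (by linarith)
    linarith

theorem price₁_sub_le_single_price₁ (M : PriceMechanism m α f π ρ)
    (hv : IsTestReport m t j y z v) (ht : 0 < t) (htm : t ≤ m) (hj : 0 < j) (hjm : j < m)
    (htj : t + j ≠ m) (hx : 0 ≤ x) (hzx : z < x) :
    π t v - π (m - j) v ≤ π t (Pi.single j x) := by
  by_contra! hlt
  obtain ⟨d, hπd, hdiff⟩ := exists_between hlt
  have hd0 : 0 < d := (M.price₁_nonneg _ (valD_single hj hjm.le hx) t htm).trans_lt hπd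
  obtain ⟨u, hu, hut, hmax, halloc⟩ := M.exists_report_alloc_mem hv ht htm hjm htj hd0
  have hutil₁ := M.utility₁_le u v hu hv.valD (m - j) (Nat.sub_le _ _)
  have hutil₂ := M.utility₂_le u v hu hv.valD (m - t) (Nat.sub_le _ _)
  rcases halloc with halloc | halloc
  · rw [halloc, Nat.sub_sub_self hjm.le, hv.value_second,
      M.price₂_compl_eq_zero hu htm fun s hs hst =>
        (hmax s hs hst).trans_lt (by linarith)] at hutil₂
    have hρ := M.le_price₂_of_single_price₁_lt hu ht htm hj hjm.le htj hx (by linarith)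
    linarith
  · rw [halloc] at hutil₁
    linarith

theorem approxPexider (M : PriceMechanism m α f π ρ) (ht : 0 < t) (htm : t ≤ m) (hj : 0 < j)
    (hjm : j < m) (htj : t + j ≠ m) :
    ApproxPexider (fun d => π t (Pi.single m d)) (fun d => π (m - j) (Pi.single m d))
      (fun d => π t (Pi.single j d)) where
  left_nonneg d hd :=
    M.price₁_nonneg _ (valD_single (hj.trans hjm) le_rfl hd.le) _ (Nat.sub_le _ _)
  right_nonneg d hd := M.price₁_nonneg _ (valD_single hj hjm.le hd.le) t htm
  left_tendsto := M.tendsto_single_price₁ (by omega) (Nat.sub_le _ _) (by omega) le_rfl (by omega)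
  right_tendsto := M.tendsto_single_price₁ ht htm hj hjm.le htj
  le_add y₀ u₀ z₀ hy₀ hu₀ hz₀ h := by
    obtain ⟨z, hz, hzz₀⟩ := exists_between (max_lt hz₀ (sub_lt_iff_lt_add'.2 h))
    obtain ⟨hz0, hyz⟩ := max_lt_iff.1 hz
    obtain ⟨y, hy, hyu⟩ := exists_between
      (max_lt (by linarith : y₀ < u₀ + z) (by linarith : z < u₀ + z))
    obtain ⟨hy₀y, hzy⟩ := max_lt_iff.1 hy
    obtain ⟨v, hv⟩ := exists_isTestReport ht htm hj hjm htj (hz0.trans hzy).le hz0.le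
    have hG := M.single_price₁_le_price₁ hv.valD ht htm le_rfl hy₀.le (by linarith [hv.value_top])
    have hH : π (m - j) v ≤ π (m - j) (Pi.single m u₀) :=
      M.price₁_le_single_top hv.valD (by omega) (Nat.sub_le _ _)
        (fun _ => hv.lt_top hz0 hzy)
        (by rw [Nat.sub_sub_self hjm.le]; linarith [hv.value_top, hv.value_second])
    have hK := M.price₁_sub_le_single_price₁ hv ht htm hj hjm htj hz₀.le hzz₀
    linarith
  add_le y₀ u₀ z₀ hu₀ hz₀ h := by
    obtain ⟨z, hz₀z, hz⟩ := exists_between (lt_sub_iff_add_lt'.2 h)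
    obtain ⟨y, huy, hyy₀⟩ := exists_between (by linarith : u₀ + z < y₀)
    have hz0 : 0 < z := hz₀.trans hz₀z
    have hzy : z < y := by linarith
    obtain ⟨v, hv⟩ := exists_isTestReport ht htm hj hjm htj (hz0.trans hzy).le hz0.le
    have hG := M.price₁_le_single_top hv.valD ht htm (fun _ => hv.lt_top hz0 hzy)
      (by linarith [hv.value_top] : v m - v (m - t) < y₀)
    have hH : π (m - j) (Pi.single m u₀) ≤ π (m - j) v :=
      M.single_price₁_le_price₁ hv.valD (by omega) (Nat.sub_le _ _) le_rfl hu₀.le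
        (by rw [Nat.sub_sub_self hjm.le]; linarith [hv.value_top, hv.value_second])
    have hK := M.single_price₁_le_price₁_sub hv ht htm hj hjm htj hz₀ hz₀z
    linarith

end PriceMechanism

/-- Prices against reports concentrated on one bundle are `w` times the reported value, except
where both bidders can be served (`t + j = m`). -/
def HasSlope (m : ℕ) (π : ℕ → (ℕ → ℝ) → ℝ) (w : ℝ) : Prop :=
  ∀ t j d, 0 < t → t ≤ m → 0 < j → j ≤ m → t + j ≠ m → 0 < d → π t (Pi.single j d) = w * d

namespace PriceMechanism

variable {m : ℕ} {α : ℝ} {f : (ℕ → ℝ) → (ℕ → ℝ) → ℕ} {π ρ : ℕ → (ℕ → ℝ) → ℝ} {t k : ℕ}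
  {w : ℝ} {v v₁ v₂ : ℕ → ℝ}

theorem exists_hasSlope (M : PriceMechanism m α f π ρ) (hm : 2 ≤ m) :
    ∃ w, 0 < w ∧ HasSlope m π w := by
  have hpos : 0 < π m (Pi.single m 1) :=
    M.single_price₁_pos (by omega) le_rfl (by omega) le_rfl (by omega) one_pos
  have htop : ∀ t, 0 < t → t ≤ m → ∀ d, 0 < d →
      π t (Pi.single m d) = π m (Pi.single m 1) * d := by
    intro t ht htm d hd
    rcases htm.eq_or_lt with rfl | htm'
    · exact (M.approxPexider ht le_rfl one_pos (by omega) (by omega)).sum_eq_mul hd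
    · have P := M.approxPexider (t := m) (j := m - t) (by omega) le_rfl (by omega) (by omega)
        (by omega)
      rw [Nat.sub_sub_self htm] at P
      exact P.left_eq_mul hd
  refine ⟨_, hpos, fun t j d ht htm hj hjm htj hd => ?_⟩
  rcases hjm.eq_or_lt with rfl | hjm'
  · exact htop t ht htm d hd
  · rw [(M.approxPexider ht htm hj hjm' htj).right_eq_mul hd, htop t ht htm 1 one_pos, mul_one]

theorem hasSlope_inv (M : PriceMechanism m α f π ρ) (hw : 0 < w) (hslope : HasSlope m π w) :
    HasSlope m ρ w⁻¹ := by
  intro j t d hj hjm ht htm hjt hd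
  have hd' : 0 < w⁻¹ * d := by positivity
  refine le_antisymm (le_of_forall_lt_imp_le_of_dense fun y hy => ?_)
    (le_of_forall_lt_imp_le_of_dense fun y hy => ?_)
  · by_contra! hyd
    have hy0 : 0 < y := hd'.trans hyd
    have hπ := M.single_price₁_le_of_lt_price₂ ht htm hj hjm hd hy0.le hy
    rw [hslope t j y ht htm hj hjm (by omega) hy0] at hπ
    exact hπ.not_gt ((inv_mul_lt_iff₀ hw).1 hyd)
  · rcases le_or_gt y 0 with hy0 | hy0
    · exact hy0.trans (M.price₂_nonneg _ (valD_single ht htm hd.le) j hjm)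
    · refine M.le_single_price₂_of_price₁_lt ht htm hj hjm (by omega) hy0.le ?_
      rw [hslope t j y ht htm hj hjm (by omega) hy0]
      exact (lt_inv_mul_iff₀ hw).1 hy

theorem mul_sub_le_price₁ (M : PriceMechanism m α f π ρ) (hw : 0 < w) (hslope : HasSlope m π w)
    (hv : ValD m v) (ht : 0 < t) (htm : t ≤ m) (hkm : k ≤ m) : w * (v k - v (m - t)) ≤ π t v := by
  rw [← le_div_iff₀' hw]
  refine le_of_forall_lt_imp_le_of_dense fun d hd => ?_
  rw [le_div_iff₀' hw]
  rcases le_or_gt d 0 with hd0 | hd0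
  · exact (mul_nonpos_of_nonneg_of_nonpos hw.le hd0).trans (M.price₁_nonneg v hv t htm)
  · have hk : 0 < k := hv.pos_of_lt (i := m - t) (by linarith)
    have htk : t + k ≠ m := by
      rintro rfl
      rw [Nat.add_sub_cancel_left] at hd
      linarith
    rw [← hslope t k d ht htm hk hkm htk hd0]
    exact M.single_price₁_le_price₁ hv ht htm hkm hd0.le hd

theorem price₁_le_mul_sub (M : PriceMechanism m α f π ρ) (hw : 0 < w) (hslope : HasSlope m π w)
    (hv : ValD m v) (ht : 0 < t) (htm : t ≤ m) (hmax : ∀ i, i ≤ m → v i ≤ v k) :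
    π t v ≤ w * (v k - v (m - t)) := by
  rw [← div_le_iff₀' hw]
  refine le_of_forall_gt_imp_ge_of_dense fun d hd => ?_
  have hd0 : 0 < d := by linarith [hmax (m - t) (Nat.sub_le _ _)]
  rw [div_le_iff₀' hw]
  refine M.price₁_le_of_single_price₁_le hv ht htm (by positivity) fun i hi him hit _ _ => ?_
  exact ⟨d, by linarith [hmax i him], (hslope t i d ht htm hi him (by omega) hd0).le⟩

theorem affine_welfare_le_of_alloc_pos (M : PriceMechanism m α f π ρ) (hw : 0 < w)
    (hslope : HasSlope m π w) (h₁ : ValD m v₁) (h₂ : ValD m v₂) (hf : 0 < f v₁ v₂) (htm : t ≤ m) :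
    v₁ t + w * v₂ (m - t) ≤ v₁ (f v₁ v₂) + w * v₂ (m - f v₁ v₂) := by
  have hfm := M.alloc_le v₁ v₂ h₁ h₂
  have hutil := M.utility₁_le v₁ v₂ h₁ h₂ t htm
  rcases Nat.eq_zero_or_pos t with rfl | ht
  · rw [M.price₁_zero v₂ h₂] at hutil
    rw [Nat.sub_zero]
    linarith [M.mul_sub_le_price₁ hw hslope h₂ hf hfm le_rfl]
  · obtain ⟨k, hkm, hmax⟩ :=
      Set.exists_max_image (Set.Iic m) v₂ (Set.finite_Iic m) ⟨0, Nat.zero_le m⟩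
    linarith [M.mul_sub_le_price₁ hw hslope h₂ hf hfm hkm,
      M.price₁_le_mul_sub hw hslope h₂ ht htm hmax]

theorem affine_welfare_le (M : PriceMechanism m α f π ρ) (hm : 0 < m) (hw : 0 < w)
    (hslope : HasSlope m π w) (h₁ : ValD m v₁) (h₂ : ValD m v₂) (htm : t ≤ m) :
    v₁ t + w * v₂ (m - t) ≤ v₁ (f v₁ v₂) + w * v₂ (m - f v₁ v₂) := by
  rcases Nat.eq_zero_or_pos (f v₁ v₂) with hf | hf
  · have hswap := M.swap.affine_welfare_le_of_alloc_pos (inv_pos.2 hw)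
      (M.hasSlope_inv hw hslope) h₂ h₁ (by omega) (Nat.sub_le m t)
    simp only [Nat.sub_sub_self htm, hf, Nat.sub_zero, Nat.sub_self] at hswap ⊢
    have hscaled := mul_le_mul_of_nonneg_left hswap hw.le
    simp only [mul_add, mul_inv_cancel_left₀ hw.ne'] at hscaled
    linarith
  · exact M.affine_welfare_le_of_alloc_pos hw hslope h₁ h₂ hf htm

end PriceMechanism

/-- If `m ≥ 2` and `(f, p₁, p₂)` is a truthful mechanism for an
extended multi-unit auction with `m` items and 2 bidders guaranteeing a finite
approximation ratio `α ≥ 1` to the optimal welfare, then `f` is an affine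
maximizer over the *full* range: there are weights `w₁, w₂ > 0` and constants
`c t` (`t ∈ {0,…,m}`) such that `f v₁ v₂` maximizes
`w₁·v₁(t) + w₂·v₂(m−t) + c t` over all `t ∈ {0,…,m}`. -/
theorem truthful_approx_is_full_range_affine_maximizer
    (m : ℕ) (hm : 2 ≤ m)
    (f : (ℕ → ℝ) → (ℕ → ℝ) → ℕ) (p₁ p₂ : (ℕ → ℝ) → (ℕ → ℝ) → ℝ)
    (hfm : ∀ v₁ v₂, ValD m v₁ → ValD m v₂ → f v₁ v₂ ≤ m)
    (htruth : Truthful m f p₁ p₂)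
    (α : ℝ) (hα : 1 ≤ α)
    (happrox : ∀ v₁ v₂, ValD m v₁ → ValD m v₂ → ∀ t, t ≤ m →
      (1 / α) * (v₁ t + v₂ (m - t)) ≤ v₁ (f v₁ v₂) + v₂ (m - f v₁ v₂)) :
    ∃ w₁ w₂ : ℝ, 0 < w₁ ∧ 0 < w₂ ∧ ∃ c : ℕ → ℝ,
      ∀ v₁ v₂, ValD m v₁ → ValD m v₂ →
        ∀ t, t ≤ m → w₁ * v₁ t + w₂ * v₂ (m - t) + c t ≤
          w₁ * v₁ (f v₁ v₂) + w₂ * v₂ (m - f v₁ v₂) + c (f v₁ v₂) := by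
  have hα0 : 0 < α := one_pos.trans_le hα
  have E : ApproxEfficient m α f := by
    refine ⟨hα0, hfm, fun v₁ v₂ h₁ h₂ t ht => ?_⟩
    rw [← div_le_iff₀' hα0, ← one_div_mul_eq_div]
    exact happrox v₁ v₂ h₁ h₂ t ht
  obtain ⟨π, ρ, M⟩ := htruth.exists_priceMechanism (by omega) E
  obtain ⟨w, hw, hslope⟩ := M.exists_hasSlope hm
  refine ⟨1, w, one_pos, hw, 0, fun v₁ v₂ h₁ h₂ t ht => ?_⟩
  simpa only [one_mul, Pi.zero_apply, add_zero] using
    M.affine_welfare_le (by omega) hw hslope h₁ h₂ ht
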